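/- arXiv:2507.05466 — 3 statements merged into one kernel-verified Lean document; each statement's English description precedes it below -/
import Mathlib

section
/- Let d ∈ ℕ, 0 < μ < L, and α ∈ (0, 2/(L+μ)]. Let f : ℝ^d → ℝ be μ-strongly convex and L-smooth with minimizer x⋆. Then for every x ∈ ℝ^d, ‖x − α∇f(x) − x⋆‖² ≤ (1 − μα)² ‖x − x⋆‖² − (α(2 − α(L+μ))/(L − μ)) ‖μ(x − x⋆) − ∇f(x)‖². In particular ‖x − α∇f(x) − x⋆‖² ≤ (1 − μα)² ‖x − x⋆‖². -/
open scoped RealInnerProductSpace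

/-!
Write `h = x - xstar` and `g = ∇f(x)`; the gradient vanishes at the minimizer. Expanding the squares,
the right-hand side of the first inequality minus its left-hand side equals
`2α(1 - αμ)/(L - μ) * ((L + μ)⟪g, h⟫ - μL‖h‖² - ‖g‖²)`, and `αμ < 1` because `α ≤ 2/(L + μ)`.
So the claim reduces to the interpolation inequality `μL‖h‖² + ‖g‖² ≤ (L + μ)⟪g, h⟫`
(`smooth_strong_interpolation`), which says that the gradient of `f - μ/2‖·‖²` is
`1/(L - μ)`-cocoercive. It follows from the quadratic lower bound `strong_lower_bound` (strong
convexity) and the quadratic upper bound `smooth_upper_bound` (Lipschitz gradient).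
The second inequality holds since the subtracted term is nonnegative.
-/

section Aux

variable {E : Type*} [NormedAddCommGroup E] [InnerProductSpace ℝ E] [CompleteSpace E]

lemma hasDerivAt_comp_line {f : E → ℝ} (hdiff : Differentiable ℝ f) (x v : E) (t : ℝ) :
    HasDerivAt (fun s : ℝ => f (x + s • v)) ⟪gradient f (x + t • v), v⟫ t := by
  have h1 : HasDerivAt (fun s : ℝ => x + s • v) v t := by
    simpa using ((hasDerivAt_id t).smul_const v).const_add x
  have h2 := (hdiff (x + t • v)).hasGradientAt.hasFDerivAt.comp_hasDerivAt t h1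
  exact h2.congr_deriv (by simp)

/-- The descent lemma: along the segment from `x` to `y`, the difference between `f` and its
quadratic majorant has nonpositive derivative. -/
lemma smooth_upper_bound {f : E → ℝ} {L : ℝ} (hL : 0 ≤ L) (hdiff : Differentiable ℝ f)
    (hlip : LipschitzWith L.toNNReal (gradient f)) (x y : E) :
    f y ≤ f x + ⟪gradient f x, y - x⟫ + L / 2 * ‖y - x‖ ^ 2 := by
  set v := y - x with hv
  have hd : ∀ t : ℝ, HasDerivAt
      (fun s : ℝ => f (x + s • v) - s * ⟪gradient f x, v⟫ - s ^ 2 * (L / 2 * ‖v‖ ^ 2))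
      (⟪gradient f (x + t • v), v⟫ - ⟪gradient f x, v⟫ - 2 * t * (L / 2 * ‖v‖ ^ 2)) t := by
    intro t
    have h := ((hasDerivAt_comp_line hdiff x v t).sub
      ((hasDerivAt_id t).mul_const ⟪gradient f x, v⟫)).sub
      ((hasDerivAt_pow 2 t).mul_const (L / 2 * ‖v‖ ^ 2))
    exact h.congr_deriv (by simp)
  have hanti : AntitoneOn
      (fun s : ℝ => f (x + s • v) - s * ⟪gradient f x, v⟫ - s ^ 2 * (L / 2 * ‖v‖ ^ 2))
      (Set.Icc 0 1) := by
    refine antitoneOn_of_deriv_nonpos (convex_Icc 0 1)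
      (fun t _ => (hd t).continuousAt.continuousWithinAt)
      (fun t _ => (hd t).differentiableAt.differentiableWithinAt) ?_
    intro t ht
    rw [interior_Icc] at ht
    rw [(hd t).deriv, ← inner_sub_left]
    have h1 := real_inner_le_norm (gradient f (x + t • v) - gradient f x) v
    have h2 := hlip.norm_sub_le (x + t • v) x
    rw [Real.coe_toNNReal L hL, add_sub_cancel_left, norm_smul, Real.norm_of_nonneg ht.1.le] at h2
    nlinarith [mul_le_mul_of_nonneg_right h2 (norm_nonneg v)]
  have h := hanti (Set.left_mem_Icc.2 zero_le_one) (Set.right_mem_Icc.2 zero_le_one) zero_le_one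
  simp only [one_smul, zero_smul, add_zero] at h
  rw [show x + v = y by rw [hv]; abel] at h
  linarith

/-- The tangent inequality for the convex function `f - μ/2‖·‖²`, rewritten in terms of `f`. -/
lemma strong_lower_bound {f : E → ℝ} {μ : ℝ} (hdiff : Differentiable ℝ f)
    (hsc : ConvexOn ℝ Set.univ (fun y => f y - μ / 2 * ‖y‖ ^ 2)) (x y : E) :
    f x + ⟪gradient f x, y - x⟫ + μ / 2 * ‖y - x‖ ^ 2 ≤ f y := by
  set v := y - x with hv
  have hxy : x + v = y := by rw [hv]; abel
  have hexp : ∀ s : ℝ, ‖x + s • v‖ ^ 2 = ‖x‖ ^ 2 + 2 * s * ⟪x, v⟫ + s ^ 2 * ‖v‖ ^ 2 := by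
    intro s
    rw [norm_add_sq_real, real_inner_smul_right, norm_smul, mul_pow, Real.norm_eq_abs, sq_abs]
    ring
  have hconv : ConvexOn ℝ Set.univ
      (fun s : ℝ => f (x + s • v) - μ / 2 * ‖x + s • v‖ ^ 2) := by
    have h := hsc.comp_affineMap (AffineMap.lineMap x y)
    have heq : (fun s : ℝ => f (x + s • v) - μ / 2 * ‖x + s • v‖ ^ 2)
        = (fun y => f y - μ / 2 * ‖y‖ ^ 2) ∘ AffineMap.lineMap x y := by
      funext s
      simp [AffineMap.lineMap_apply, hv, add_comm]
    rw [heq]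
    exact h
  have hd : HasDerivAt (fun s : ℝ => f (x + s • v) - μ / 2 * ‖x + s • v‖ ^ 2)
      (⟪gradient f x, v⟫ - μ * ⟪x, v⟫) 0 := by
    have h := (hasDerivAt_comp_line hdiff x v 0).sub
      (((((hasDerivAt_id (0 : ℝ)).const_mul 2).mul_const ⟪x, v⟫).const_add (‖x‖ ^ 2)).add
        ((hasDerivAt_pow 2 (0 : ℝ)).mul_const (‖v‖ ^ 2)) |>.const_mul (μ / 2))
    simp only [hexp]
    refine h.congr_deriv ?_
    rw [zero_smul, add_zero]
    ring
  have h := hconv.le_slope_of_hasDerivAt (Set.mem_univ 0) (Set.mem_univ 1) zero_lt_one hd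
  have h1 := hexp 1
  simp only [slope_def_field, one_smul, zero_smul, add_zero, sub_zero, div_one, hxy] at h h1
  rw [h1] at h
  linarith

/-- One half of cocoercivity: the lower bound based at `x` and the upper bound based at `y` are
compared at the minimizer `z` of their difference. -/
lemma bregman_lower_bound {f : E → ℝ} {μ L : ℝ} (hμL : μ < L) (hL : 0 ≤ L)
    (hsc : ConvexOn ℝ Set.univ (fun y => f y - μ / 2 * ‖y‖ ^ 2)) (hdiff : Differentiable ℝ f)
    (hlip : LipschitzWith L.toNNReal (gradient f)) (x y : E) :
    f x + ⟪gradient f x, y - x⟫ + μ / 2 * ‖y - x‖ ^ 2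
      + 1 / (2 * (L - μ)) * ‖gradient f y - gradient f x - μ • (y - x)‖ ^ 2 ≤ f y := by
  set w := gradient f y - gradient f x - μ • (y - x) with hw
  set c := 1 / (L - μ) with hc
  have hcM : c * (L - μ) = 1 := by rw [hc]; field_simp [(sub_pos.2 hμL).ne']
  have hlow := strong_lower_bound hdiff hsc x (y - c • w)
  have hupp := smooth_upper_bound hL hdiff hlip y (y - c • w)
  have e1 : y - c • w - x = (y - x) - c • w := by abel
  have e2 : y - c • w - y = -(c • w) := by abel
  have hww : ‖w‖ ^ 2 = ⟪gradient f y, w⟫ - ⟪gradient f x, w⟫ - μ * ⟪y - x, w⟫ := by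
    rw [← real_inner_self_eq_norm_sq]
    nth_rewrite 1 [hw]
    rw [inner_sub_left, inner_sub_left, real_inner_smul_left]
  rw [e1, inner_sub_right, norm_sub_sq_real, real_inner_smul_right, real_inner_smul_right,
    norm_smul, mul_pow, Real.norm_eq_abs, sq_abs] at hlow
  rw [e2, inner_neg_right, norm_neg, real_inner_smul_right, norm_smul, mul_pow,
    Real.norm_eq_abs, sq_abs] at hupp
  have hc2 : 1 / (2 * (L - μ)) = c / 2 := by rw [hc]; field_simp
  rw [hc2]
  have key : (L - μ) * c ^ 2 * ‖w‖ ^ 2 = c * ‖w‖ ^ 2 := by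
    linear_combination (c * ‖w‖ ^ 2) * hcM
  have key2 := congrArg (fun r => c * r) hww
  linarith

/-- Cocoercivity of the gradient of `f - μ/2‖·‖²`, expanded in terms of the gradient of `f`. -/
lemma smooth_strong_interpolation {f : E → ℝ} {μ L : ℝ} (hμL : μ < L) (hL : 0 ≤ L)
    (hsc : ConvexOn ℝ Set.univ (fun y => f y - μ / 2 * ‖y‖ ^ 2)) (hdiff : Differentiable ℝ f)
    (hlip : LipschitzWith L.toNNReal (gradient f)) (x y : E) :
    μ * L * ‖y - x‖ ^ 2 + ‖gradient f y - gradient f x‖ ^ 2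
      ≤ (L + μ) * ⟪gradient f y - gradient f x, y - x⟫ := by
  have h1 := bregman_lower_bound hμL hL hsc hdiff hlip x y
  have h2 := bregman_lower_bound hμL hL hsc hdiff hlip y x
  have e : gradient f x - gradient f y - μ • (x - y)
      = -(gradient f y - gradient f x - μ • (y - x)) := by
    rw [smul_sub, smul_sub]; abel
  rw [e, norm_neg, ← neg_sub y x, norm_neg, inner_neg_right] at h2
  have hM : 0 < L - μ := sub_pos.2 hμL
  have hsum : 1 / (L - μ) * ‖gradient f y - gradient f x - μ • (y - x)‖ ^ 2
      ≤ ⟪gradient f y - gradient f x, y - x⟫ - μ * ‖y - x‖ ^ 2 := by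
    have : 1 / (L - μ) = 2 * (1 / (2 * (L - μ))) := by field_simp
    rw [this, inner_sub_left]
    linarith
  rw [one_div_mul_eq_div, div_le_iff₀ hM, norm_sub_sq_real, real_inner_smul_right, norm_smul,
    mul_pow, Real.norm_eq_abs, sq_abs] at hsum
  linarith

end Aux

/-- One exact gradient descent step with stepsize `α ∈ (0, 2/(L+μ)]` on a `μ`-strongly convex,
`L`-smooth function contracts the distance to the minimizer. -/
theorem stmt2 (d : ℕ) (μ L α : ℝ) (hμ : 0 < μ) (hμL : μ < L)
    (hα0 : 0 < α) (hα : α ≤ 2 / (L + μ))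
    (f : EuclideanSpace ℝ (Fin d) → ℝ)
    (hsc : ConvexOn ℝ Set.univ (fun y => f y - μ / 2 * ‖y‖ ^ 2))
    (hdiff : Differentiable ℝ f)
    (hlip : LipschitzWith L.toNNReal (gradient f))
    (xstar : EuclideanSpace ℝ (Fin d)) (hmin : ∀ y, f xstar ≤ f y)
    (x : EuclideanSpace ℝ (Fin d)) :
    ‖x - α • gradient f x - xstar‖ ^ 2 ≤
        (1 - μ * α) ^ 2 * ‖x - xstar‖ ^ 2 -
          (α * (2 - α * (L + μ)) / (L - μ)) * ‖μ • (x - xstar) - gradient f x‖ ^ 2 ∧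
      ‖x - α • gradient f x - xstar‖ ^ 2 ≤ (1 - μ * α) ^ 2 * ‖x - xstar‖ ^ 2 := by
  have hM : 0 < L - μ := sub_pos.2 hμL
  have hα' : α * (L + μ) ≤ 2 := (le_div_iff₀ (by linarith)).1 hα
  have hαμ : 0 ≤ 1 - α * μ := by nlinarith [mul_pos hα0 hM]
  have hgrad : gradient f xstar = 0 := by
    have hloc : IsLocalMin f xstar := Filter.Eventually.of_forall hmin
    rw [gradient, hloc.fderiv_eq_zero, map_zero]
  have hint := smooth_strong_interpolation hμL (hμ.trans hμL).le hsc hdiff hlip xstar x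
  rw [hgrad, sub_zero] at hint
  have hfirst : ‖x - α • gradient f x - xstar‖ ^ 2 ≤
      (1 - μ * α) ^ 2 * ‖x - xstar‖ ^ 2 -
        (α * (2 - α * (L + μ)) / (L - μ)) * ‖μ • (x - xstar) - gradient f x‖ ^ 2 := by
    rw [show x - α • gradient f x - xstar = (x - xstar) - α • gradient f x by abel]
    rw [norm_sub_sq_real, norm_sub_sq_real (μ • (x - xstar)), real_inner_smul_right,
      real_inner_smul_left, norm_smul, norm_smul, mul_pow, mul_pow, Real.norm_eq_abs,
      Real.norm_eq_abs, sq_abs, sq_abs, real_inner_comm]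
    have hnn : 0 ≤ 2 * α * (1 - α * μ) / (L - μ) *
        ((L + μ) * ⟪gradient f x, x - xstar⟫
          - (μ * L * ‖x - xstar‖ ^ 2 + ‖gradient f x‖ ^ 2)) :=
      mul_nonneg (by positivity) (sub_nonneg.2 hint)
    rw [← sub_nonneg]
    refine hnn.trans_eq ?_
    field_simp
    ring
  refine ⟨hfirst, hfirst.trans (sub_le_self _ ?_)⟩
  have h2 : 0 ≤ 2 - α * (L + μ) := sub_nonneg.2 hα'
  positivity
end

section
/- Let d ∈ ℕ, 0 ≤ μ < L < ∞, and let I be a finite index set with data {(x_i, f_i, g_i)}_{i ∈ I} ⊂ ℝ^d × ℝ × ℝ^d. There exists a function f : ℝ^d → ℝ that is μ-strongly convex and L-smooth and satisfies f(x_i) = f_i and ∇f(x_i) = g_i for all i ∈ I if and only if, for all i, j ∈ I, f_j ≥ f_i + ⟨g_i, x_j − x_i⟩ + (L/(2(L − μ))) ( (1/L)‖g_i − g_j‖² + μ‖x_i − x_j‖² − (2μ/L)⟨g_i − g_j, x_i − x_j⟩ ). -/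
/-!
Write `h = f - μ/2 ‖·‖²` and `M = L - μ`, with data `aᵢ = fᵢ - μ/2 ‖xᵢ‖²` and `sᵢ = gᵢ - μ xᵢ`.
The inequalities then become
`aᵢ + ⟪sᵢ, xⱼ - xᵢ⟫ + ‖sᵢ - sⱼ‖² / (2M) ≤ aⱼ` (`shifted_condition`), the interpolation
conditions for a convex `h` satisfying the quadratic upper bound
`h z ≤ h y + ⟪∇h y, z - y⟫ + M/2 ‖z - y‖²`.

*Necessity.* The descent lemma for `f` gives this upper bound for `h`. Comparing the affine minorant
of `h` at `xᵢ` with the quadratic majorant at `xⱼ`, at the point `xⱼ + (sᵢ - sⱼ)/M`, gives the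
inequality (`cocoercive_bound`).

*Sufficiency.* The data prescribe the quadratics
`aᵢ + ⟪sᵢ, y - xᵢ⟫ + M/2 ‖y - xᵢ‖² = cᵢ + M/2 ‖y - zᵢ‖²`, where `zᵢ = xᵢ - sᵢ/M` and
`cᵢ = aᵢ - ‖sᵢ‖²/(2M)`. The function
`h y = min { ∑ wᵢ cᵢ + M/2 ‖y - ∑ wᵢ zᵢ‖² | w in the standard simplex }`
is convex, as the partial minimum of a jointly convex function; fixing a minimizing `w` gives a
quadratic upper bound at every point; and the interpolation inequalities say precisely that
`h xᵢ = aᵢ` (`exists_smooth_convex`). For a convex function such an upper bound forces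
differentiability, by reflection through the base point (`ConvexOn.abs_le_of_upper`), and by
cocoercivity an `M`-Lipschitz gradient (`lipschitz_of_upper`). Adding back `μ/2 ‖·‖²` yields `f`.
-/

open scoped RealInnerProductSpace

section Aux

variable {E : Type*} [NormedAddCommGroup E] [InnerProductSpace ℝ E]

/-! ### Gradients, convexity and the descent lemma -/

theorem hasGradientAt_of_quadratic_bound [CompleteSpace E] {f : E → ℝ} {G x : E} {C : ℝ}
    (h : ∀ y, |f y - f x - ⟪G, y - x⟫| ≤ C * ‖y - x‖ ^ 2) : HasGradientAt f G x := by
  rw [hasGradientAt_iff_isLittleO]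
  have hO : (fun y => f y - f x - ⟪G, y - x⟫) =O[nhds x] fun y => ‖y - x‖ ^ 2 :=
    Asymptotics.IsBigO.of_bound C (Filter.Eventually.of_forall fun y => by
      simpa using h y)
  refine hO.trans_isLittleO ?_
  exact Asymptotics.isLittleO_pow_sub_sub x one_lt_two

theorem line_hasDerivAt [CompleteSpace E] {f : E → ℝ} {G x v : E} {t : ℝ}
    (hf : HasGradientAt f G (x + t • v)) :
    HasDerivAt (fun s : ℝ => f (x + s • v)) ⟪G, v⟫ t := by
  have h1 : HasDerivAt (fun s : ℝ => x + s • v) v t := by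
    simpa using ((hasDerivAt_id t).smul_const v).const_add x
  simpa [Function.comp_def] using hf.hasFDerivAt.comp_hasDerivAt t h1

/-- First-order characterization of convexity: a convex function lies above its tangents. -/
theorem ConvexOn.gradient_lower_bound [CompleteSpace E] {h : E → ℝ}
    (hc : ConvexOn ℝ Set.univ h) {G x : E} (hG : HasGradientAt h G x) (y : E) :
    h x + ⟪G, y - x⟫ ≤ h y := by
  have hd : HasDerivAt (fun s : ℝ => h (x + s • (y - x))) ⟪G, y - x⟫ 0 :=
    line_hasDerivAt (by simpa using hG)
  have hc' : ConvexOn ℝ Set.univ (fun s : ℝ => h (x + s • (y - x))) := by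
    have := hc.comp_affineMap (AffineMap.lineMap x y)
    simpa [Function.comp_def, AffineMap.lineMap_apply, add_comm] using this
  have := hc'.le_slope_of_hasDerivAt (Set.mem_univ 0) (Set.mem_univ 1) one_pos hd
  simp [slope_def_field] at this
  linarith

/-- The sharp constant `L / 2` comes from monotonicity along the segment from `x` to `y` of the
difference between `f` and the quadratic majorant. -/
theorem descent_lemma [CompleteSpace E] {f : E → ℝ} {L : ℝ} (hL : 0 ≤ L)
    (hd : Differentiable ℝ f) (hl : LipschitzWith L.toNNReal (gradient f)) (x y : E) :
    f y ≤ f x + ⟪gradient f x, y - x⟫ + L / 2 * ‖y - x‖ ^ 2 := by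
  set v := y - x with hv
  let φ : ℝ → ℝ := fun t => f (x + t • v) - t * ⟪gradient f x, v⟫ - L / 2 * ‖v‖ ^ 2 * t ^ 2
  have hφ : ∀ t, HasDerivAt φ
      (⟪gradient f (x + t • v), v⟫ - ⟪gradient f x, v⟫ - L / 2 * ‖v‖ ^ 2 * (2 * t)) t := by
    intro t
    have h1 := line_hasDerivAt (v := v) (hd (x + t • v)).hasGradientAt
    have h2 := (hasDerivAt_id t).mul_const ⟪gradient f x, v⟫
    have h3 := ((hasDerivAt_id t).pow 2).const_mul (L / 2 * ‖v‖ ^ 2)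
    refine ((h1.sub h2).sub h3).congr_deriv ?_
    simp
  have hanti : AntitoneOn φ (Set.Icc 0 1) := by
    refine antitoneOn_of_deriv_nonpos (convex_Icc 0 1)
      (fun t _ => (hφ t).continuousAt.continuousWithinAt)
      (fun t _ => (hφ t).differentiableAt.differentiableWithinAt) fun t ht => ?_
    rw [interior_Icc] at ht
    rw [(hφ t).deriv, ← inner_sub_left]
    have h1 := real_inner_le_norm (gradient f (x + t • v) - gradient f x) v
    have h2 : ‖gradient f (x + t • v) - gradient f x‖ ≤ L * (t * ‖v‖) := by
      have := hl.dist_le_mul (x + t • v) x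
      simpa [dist_eq_norm, norm_smul, abs_of_pos ht.1, Real.coe_toNNReal L hL] using this
    have h3 := mul_le_mul_of_nonneg_right h2 (norm_nonneg v)
    nlinarith
  have := hanti (Set.left_mem_Icc.2 zero_le_one) (Set.right_mem_Icc.2 zero_le_one) zero_le_one
  have e : x + v = y := add_sub_cancel x y
  simp only [φ, one_smul, zero_smul, add_zero, e] at this
  linarith

/-! ### Cocoercivity from quadratic majorants -/

/-- An affine minorant touching `h` at `x` and a quadratic majorant touching `h` at `y` improve
the tangent inequality by a multiple of the squared distance of the slopes. -/
theorem cocoercive_bound {h : E → ℝ} {M : ℝ} (hM : 0 < M) {x y s t : E}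
    (hlow : ∀ z, h x + ⟪s, z - x⟫ ≤ h z)
    (hup : ∀ z, h z ≤ h y + ⟪t, z - y⟫ + M / 2 * ‖z - y‖ ^ 2) :
    h x + ⟪s, y - x⟫ + 1 / (2 * M) * ‖s - t‖ ^ 2 ≤ h y := by
  -- the minimizer in `z` of the gap between the two bounds
  have h1 := (hlow (y + M⁻¹ • (s - t))).trans (hup (y + M⁻¹ • (s - t)))
  have e1 : y + M⁻¹ • (s - t) - x = (y - x) + M⁻¹ • (s - t) := by abel
  rw [e1, add_sub_cancel_left, inner_add_right, inner_smul_right, inner_smul_right, norm_smul,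
    mul_pow, Real.norm_eq_abs, sq_abs] at h1
  have e2 : ⟪s, s - t⟫ - ⟪t, s - t⟫ = ‖s - t‖ ^ 2 := by
    rw [← inner_sub_left, real_inner_self_eq_norm_sq]
  have e3 : M / 2 * (M⁻¹ ^ 2 * ‖s - t‖ ^ 2) = M⁻¹ * ‖s - t‖ ^ 2 / 2 := by field_simp
  have e4 : 1 / (2 * M) * ‖s - t‖ ^ 2 = M⁻¹ * ‖s - t‖ ^ 2 / 2 := by field_simp
  rw [e3, ← e2] at h1
  rw [e4, ← e2]
  linarith

/-- A quadratic upper bound on a convex function is automatically two-sided, so `G` is its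
gradient at `x` by `hasGradientAt_of_quadratic_bound`. -/
theorem ConvexOn.abs_le_of_upper {h : E → ℝ} (hc : ConvexOn ℝ Set.univ h) {M : ℝ} {x G : E}
    (hup : ∀ z, h z ≤ h x + ⟪G, z - x⟫ + M / 2 * ‖z - x‖ ^ 2) (z : E) :
    |h z - h x - ⟪G, z - x⟫| ≤ M / 2 * ‖z - x‖ ^ 2 := by
  -- the upper bound at the reflection of `z` through `x` turns into a lower bound at `z`
  have h1 := hup z
  have h2 := hup (x - (z - x))
  have h3 := hc.2 (Set.mem_univ z) (Set.mem_univ (x - (z - x)))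
    (by norm_num : (0 : ℝ) ≤ 1 / 2) (by norm_num : (0 : ℝ) ≤ 1 / 2) (by norm_num)
  have e1 : (1 / 2 : ℝ) • z + (1 / 2 : ℝ) • (x - (z - x)) = x := by module
  have e2 : x - (z - x) - x = -(z - x) := by abel
  rw [e1, smul_eq_mul, smul_eq_mul] at h3
  rw [e2, inner_neg_right, norm_neg] at h2
  rw [abs_le]
  constructor <;> linarith

/-- If every `G y` is the slope of a quadratic majorant of the convex function `h` at `y`, then
`G`, which is the gradient of `h`, is `M`-Lipschitz: add the cocoercivity bounds for `(y, z)` and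
`(z, y)`. -/
theorem lipschitz_of_upper [CompleteSpace E] {h : E → ℝ} (hc : ConvexOn ℝ Set.univ h)
    {M : ℝ} (hM : 0 < M) {G : E → E}
    (hup : ∀ y z, h z ≤ h y + ⟪G y, z - y⟫ + M / 2 * ‖z - y‖ ^ 2) (y z : E) :
    ‖G y - G z‖ ≤ M * ‖y - z‖ := by
  have hlow : ∀ y z, h y + ⟪G y, z - y⟫ ≤ h z := fun y z =>
    hc.gradient_lower_bound (hasGradientAt_of_quadratic_bound (hc.abs_le_of_upper (hup y))) z
  have h1 := cocoercive_bound hM (hlow y) (hup z)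
  have h2 := cocoercive_bound hM (hlow z) (hup y)
  rw [norm_sub_rev (G z)] at h2
  have e : ⟪G y, z - y⟫ + ⟪G z, y - z⟫ = -⟪G y - G z, y - z⟫ := by
    simp only [inner_sub_left, inner_sub_right]; ring
  have h3 := real_inner_le_norm (G y - G z) (y - z)
  have h4 : 1 / M * ‖G y - G z‖ ^ 2 ≤ ‖G y - G z‖ * ‖y - z‖ := by
    have : 1 / (2 * M) * ‖G y - G z‖ ^ 2 = 1 / M * ‖G y - G z‖ ^ 2 / 2 := by field_simp
    linarith
  rcases (norm_nonneg (G y - G z)).eq_or_lt with h0 | h0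
  · rw [← h0]; positivity
  · rw [div_mul_eq_mul_div, one_mul, div_le_iff₀ hM] at h4
    nlinarith

/-! ### Reduction to the convex case and the interpolant -/

/-- Subtracting `μ / 2 * ‖·‖ ^ 2` reduces the interpolation inequality to the case `μ = 0` with
smoothness constant `L - μ`. -/
theorem shifted_condition {μ L : ℝ} (hL : 0 < L) (hμL : μ < L) (x y s t : E) (a b : ℝ) :
    (b ≥ a + ⟪s, y - x⟫ + L / (2 * (L - μ)) * ((1 / L) * ‖s - t‖ ^ 2 + μ * ‖x - y‖ ^ 2 -
      (2 * μ / L) * ⟪s - t, x - y⟫)) ↔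
    (a - μ / 2 * ‖x‖ ^ 2) + ⟪s - μ • x, y - x⟫
      + 1 / (2 * (L - μ)) * ‖(s - μ • x) - (t - μ • y)‖ ^ 2 ≤ b - μ / 2 * ‖y‖ ^ 2 := by
  have hM : 0 < L - μ := sub_pos.2 hμL
  have e1 : (s - μ • x) - (t - μ • y) = (s - t) - μ • (x - y) := by module
  have e2 : ‖y‖ ^ 2 = ‖x‖ ^ 2 + 2 * ⟪x, y - x⟫ + ‖x - y‖ ^ 2 := by
    have := norm_add_sq_real x (y - x)
    rwa [add_sub_cancel, norm_sub_rev y x] at this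
  rw [e1, e2, norm_sub_sq_real (s - t) (μ • (x - y)), norm_smul, inner_smul_right,
    inner_sub_left s (μ • x), inner_smul_left, mul_pow, Real.norm_eq_abs, sq_abs, RCLike.conj_to_real, ge_iff_le]
  generalize ‖s - t‖ ^ 2 = A
  generalize ‖x - y‖ ^ 2 = B
  generalize ⟪s - t, x - y⟫ = C
  generalize ⟪s, y - x⟫ = D
  generalize ⟪x, y - x⟫ = F
  have e : L / (2 * (L - μ)) * ((1 / L) * A + μ * B - (2 * μ / L) * C)
      = 1 / (2 * (L - μ)) * (A - 2 * (μ * C) + μ ^ 2 * B) + μ / 2 * B := by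
    field_simp; ring
  rw [e]
  constructor <;> intro h <;> linarith

/-- The interpolant for `μ = 0`, constructed as a partial minimum over the standard simplex.
Differentiability is encoded by quadratic majorants: one with some slope `G y` at each `y`, and one with the
prescribed slope `s i` at each `x i`. -/
theorem exists_smooth_convex {I : Type*} [Fintype I] [Nonempty I] {M : ℝ} (hM : 0 < M)
    (x s : I → E) (a : I → ℝ)
    (hcond : ∀ i j, a i + ⟪s i, x j - x i⟫ + 1 / (2 * M) * ‖s i - s j‖ ^ 2 ≤ a j) :
    ∃ (h : E → ℝ) (G : E → E), ConvexOn ℝ Set.univ h ∧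
      (∀ y z, h z ≤ h y + ⟪G y, z - y⟫ + M / 2 * ‖z - y‖ ^ 2) ∧
      (∀ i, h (x i) = a i ∧ ∀ z, h z ≤ h (x i) + ⟪s i, z - x i⟫ + M / 2 * ‖z - x i‖ ^ 2) := by
  classical
  -- `p w` and `c w` are the `w`-averages of the centres `zⱼ` and of the minimal values `cⱼ`
  -- of the data quadratics
  let p : (I → ℝ) → E := fun w => ∑ j, w j • (x j - M⁻¹ • s j)
  let c : (I → ℝ) → ℝ := fun w => ∑ j, w j * (a j - 1 / (2 * M) * ‖s j‖ ^ 2)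
  let Φ : E → (I → ℝ) → ℝ := fun y w => c w + M / 2 * ‖y - p w‖ ^ 2
  have hcont : ∀ y, Continuous (Φ y) := fun y => by
    simp only [Φ, c, p]; fun_prop
  have hmin : ∀ y, ∃ w ∈ stdSimplex ℝ I, ∀ w' ∈ stdSimplex ℝ I, Φ y w ≤ Φ y w' := fun y =>
    (isCompact_stdSimplex ℝ I).exists_isMinOn
      ⟨_, single_mem_stdSimplex ℝ (Classical.arbitrary I)⟩ (hcont y).continuousOn
  choose w hw hwmin using hmin
  -- a quadratic of curvature `M` equals its second-order expansion at any point `y`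
  have hquad : ∀ y z q : E, M / 2 * ‖z - q‖ ^ 2
      = M / 2 * ‖y - q‖ ^ 2 + ⟪M • (y - q), z - y⟫ + M / 2 * ‖z - y‖ ^ 2 := fun y z q => by
    have : z - q = (y - q) + (z - y) := by abel
    rw [this, norm_add_sq_real, inner_smul_left, RCLike.conj_to_real]
    ring
  have hΦ : ∀ y z v, Φ z v = Φ y v + ⟪M • (y - p v), z - y⟫ + M / 2 * ‖z - y‖ ^ 2 :=
    fun y z v => by
      simp only [Φ]; rw [hquad y z]; ring
  -- at the vertex `i` of the simplex the quadratic touches the data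
  have hvert : ∀ i, Φ (x i) (Pi.single i 1) = a i ∧
      M • (x i - p (Pi.single i 1)) = s i := fun i => by
    have hp : p (Pi.single i 1) = x i - M⁻¹ • s i := by
      simp [p]
    have hcv : c (Pi.single i 1) = a i - 1 / (2 * M) * ‖s i‖ ^ 2 := by
      simp [c, Pi.single_apply]
    constructor
    · simp only [Φ, hp, hcv, sub_sub_cancel, norm_smul, mul_pow, Real.norm_eq_abs, sq_abs]
      field_simp; ring
    · rw [hp, sub_sub_cancel, smul_inv_smul₀ hM.ne']
  -- average the `i`-th interpolation inequalities with weights `v`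
  have hlow : ∀ i, ∀ v ∈ stdSimplex ℝ I, a i ≤ Φ (x i) v := fun i v hv => by
    have h1 : ∑ j, v j * a i ≤ ∑ j, v j * ((a j - 1 / (2 * M) * ‖s j‖ ^ 2)
        + ⟪s i, x i - (x j - M⁻¹ • s j)⟫ - 1 / (2 * M) * ‖s i‖ ^ 2) := by
      refine Finset.sum_le_sum fun j _ => mul_le_mul_of_nonneg_left ?_ (hv.1 j)
      have := hcond i j
      have e : x i - (x j - M⁻¹ • s j) = M⁻¹ • s j - (x j - x i) := by abel
      rw [e, inner_sub_right, inner_smul_right]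
      rw [norm_sub_sq_real] at this
      have e' : 1 / (2 * M) * (‖s i‖ ^ 2 - 2 * ⟪s i, s j⟫ + ‖s j‖ ^ 2) =
        1 / (2 * M) * ‖s i‖ ^ 2 - M⁻¹ * ⟪s i, s j⟫ + 1 / (2 * M) * ‖s j‖ ^ 2 := by
        field_simp
      linarith
    have e1 : ∑ j, v j * a i = a i := by rw [← Finset.sum_mul, hv.2, one_mul]
    have e2 : ∑ j, v j * ((a j - 1 / (2 * M) * ‖s j‖ ^ 2)
        + ⟪s i, x i - (x j - M⁻¹ • s j)⟫ - 1 / (2 * M) * ‖s i‖ ^ 2)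
        = c v + ⟪s i, x i - p v⟫ - 1 / (2 * M) * ‖s i‖ ^ 2 := by
      have e3 : x i - p v = ∑ j, v j • (x i - (x j - M⁻¹ • s j)) := by
        simp only [smul_sub (v _) (x i), Finset.sum_sub_distrib, ← Finset.sum_smul, hv.2, one_smul,
          p]
      rw [e3, inner_sum]
      simp only [mul_add, mul_sub (v _) (_ + _), Finset.sum_sub_distrib, Finset.sum_add_distrib,
        ← Finset.sum_mul, hv.2, one_mul, inner_smul_right, c]
    rw [e1, e2] at h1
    -- Fenchel-Young for the quadratic
    have h2 : 0 ≤ M / 2 * ‖x i - p v - M⁻¹ • s i‖ ^ 2 := by positivity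
    rw [norm_sub_sq_real, inner_smul_right, norm_smul, mul_pow, Real.norm_eq_abs, sq_abs,
      real_inner_comm] at h2
    have e4 : M / 2 * (‖x i - p v‖ ^ 2 - 2 * (M⁻¹ * ⟪s i, x i - p v⟫) + M⁻¹ ^ 2 * ‖s i‖ ^ 2)
        = M / 2 * ‖x i - p v‖ ^ 2 - ⟪s i, x i - p v⟫ + 1 / (2 * M) * ‖s i‖ ^ 2 := by
      field_simp
    simp only [Φ]
    linarith
  have hval : ∀ i, Φ (x i) (w (x i)) = a i := fun i =>
    le_antisymm ((hwmin _ _ (single_mem_stdSimplex ℝ i)).trans (hvert i).1.le)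
      (hlow i _ (hw _))
  refine ⟨fun y => Φ y (w y), fun y => M • (y - p (w y)), ⟨convex_univ, ?_⟩, ?_, ?_⟩
  · intro y _ z _ α β hα hβ hαβ
    have hmem := convex_stdSimplex ℝ I (hw y) (hw z) hα hβ hαβ
    refine (hwmin _ _ hmem).trans ?_
    have hc : c (α • w y + β • w z) = α * c (w y) + β * c (w z) := by
      simp [c, add_mul, Finset.sum_add_distrib, Finset.mul_sum, mul_assoc]
    have hp : p (α • w y + β • w z) = α • p (w y) + β • p (w z) := by
      simp only [p, Pi.add_apply, Pi.smul_apply, smul_eq_mul, add_smul, mul_smul,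
        Finset.sum_add_distrib, Finset.smul_sum]
    have hconv : ConvexOn ℝ Set.univ fun u : E => ‖u‖ ^ 2 :=
      convexOn_univ_norm.pow (fun _ _ => norm_nonneg _) 2
    have h1 := hconv.2 (Set.mem_univ (y - p (w y))) (Set.mem_univ (z - p (w z))) hα hβ hαβ
    have e : α • y + β • z - (α • p (w y) + β • p (w z))
        = α • (y - p (w y)) + β • (z - p (w z)) := by module
    simp only [Φ, hc, hp, e, smul_eq_mul] at h1 ⊢
    have := mul_le_mul_of_nonneg_left h1 (by positivity : 0 ≤ M / 2)
    linarith
  · intro y z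
    exact (hwmin z _ (hw y)).trans (hΦ y z _).le
  · intro i
    refine ⟨hval i, fun z => ?_⟩
    refine (hwmin z _ (single_mem_stdSimplex ℝ i)).trans ?_
    rw [hΦ (x i) z, (hvert i).1, (hvert i).2]
    exact (congrArg (· + ⟪s i, z - x i⟫ + M / 2 * ‖z - x i‖ ^ 2) (hval i)).ge

theorem exists_interpolant [CompleteSpace E] {I : Type*} [Fintype I] [Nonempty I] {μ L : ℝ}
    (hμ : 0 ≤ μ) (hμL : μ < L) (x g : I → E) (fv : I → ℝ)
    (hcond : ∀ i j, fv j ≥ fv i + ⟪g i, x j - x i⟫ +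
        L / (2 * (L - μ)) * ((1 / L) * ‖g i - g j‖ ^ 2 + μ * ‖x i - x j‖ ^ 2 -
          (2 * μ / L) * ⟪g i - g j, x i - x j⟫)) :
    ∃ f : E → ℝ, ConvexOn ℝ Set.univ (fun y => f y - μ / 2 * ‖y‖ ^ 2) ∧
        Differentiable ℝ f ∧
        LipschitzWith L.toNNReal (gradient f) ∧
        ∀ i, f (x i) = fv i ∧ gradient f (x i) = g i := by
  have hL : 0 < L := hμ.trans_lt hμL
  have hM : 0 < L - μ := sub_pos.2 hμL
  obtain ⟨h, G, hc, hup, hdata⟩ := exists_smooth_convex hM x (fun i => g i - μ • x i)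
    (fun i => fv i - μ / 2 * ‖x i‖ ^ 2)
    fun i j => (shifted_condition hL hμL _ _ _ _ _ _).1 (hcond i j)
  have hgrad : ∀ y T, (∀ z, h z ≤ h y + ⟪T, z - y⟫ + (L - μ) / 2 * ‖z - y‖ ^ 2) →
      HasGradientAt (fun z => h z + μ / 2 * ‖z‖ ^ 2) (T + μ • y) y := by
    intro y T hT
    refine hasGradientAt_of_quadratic_bound (C := L / 2) fun z => ?_
    have h1 := abs_le.1 (hc.abs_le_of_upper hT z)
    have e2 : ‖z‖ ^ 2 = ‖y‖ ^ 2 + 2 * ⟪y, z - y⟫ + ‖z - y‖ ^ 2 := by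
      have := norm_add_sq_real y (z - y)
      rwa [add_sub_cancel] at this
    have h3 : 0 ≤ μ * ‖z - y‖ ^ 2 := by positivity
    rw [e2, inner_add_left, inner_smul_left, RCLike.conj_to_real, abs_le]
    constructor <;> linarith [h1.1, h1.2]
  have hG : gradient (fun z => h z + μ / 2 * ‖z‖ ^ 2) = fun y => G y + μ • y :=
    gradient_eq fun y => hgrad y _ (hup y)
  refine ⟨fun z => h z + μ / 2 * ‖z‖ ^ 2, by simpa using hc,
    fun y => (hgrad y _ (hup y)).differentiableAt, ?_, fun i => ⟨by simp [(hdata i).1], ?_⟩⟩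
  · rw [hG]
    refine LipschitzWith.of_dist_le_mul fun y z => ?_
    rw [Real.coe_toNNReal L hL.le, dist_eq_norm, dist_eq_norm]
    have e : G y + μ • y - (G z + μ • z) = (G y - G z) + μ • (y - z) := by module
    have h1 := lipschitz_of_upper hc hM hup y z
    have h2 := norm_add_le (G y - G z) (μ • (y - z))
    rw [norm_smul, Real.norm_of_nonneg hμ] at h2
    rw [e]
    linarith
  · rw [(hgrad _ _ (hdata i).2).gradient, sub_add_cancel]

theorem interpolation_necessary [CompleteSpace E] {μ L : ℝ} (hμ : 0 ≤ μ) (hμL : μ < L)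
    {f : E → ℝ} (hc : ConvexOn ℝ Set.univ (fun y => f y - μ / 2 * ‖y‖ ^ 2))
    (hd : Differentiable ℝ f) (hl : LipschitzWith L.toNNReal (gradient f)) (x y : E) :
    f y ≥ f x + ⟪gradient f x, y - x⟫ + L / (2 * (L - μ)) *
      ((1 / L) * ‖gradient f x - gradient f y‖ ^ 2 + μ * ‖x - y‖ ^ 2 -
        (2 * μ / L) * ⟪gradient f x - gradient f y, x - y⟫) := by
  have hL : 0 < L := hμ.trans_lt hμL
  rw [shifted_condition hL hμL]
  have hup : ∀ y z, (f z - μ / 2 * ‖z‖ ^ 2) ≤ (f y - μ / 2 * ‖y‖ ^ 2)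
      + ⟪gradient f y - μ • y, z - y⟫ + (L - μ) / 2 * ‖z - y‖ ^ 2 := by
    intro y z
    have h1 := descent_lemma hL.le hd hl y z
    have e2 : ‖z‖ ^ 2 = ‖y‖ ^ 2 + 2 * ⟪y, z - y⟫ + ‖z - y‖ ^ 2 := by
      have := norm_add_sq_real y (z - y)
      rwa [add_sub_cancel] at this
    rw [e2, inner_sub_left, inner_smul_left, RCLike.conj_to_real]
    linarith
  exact cocoercive_bound (h := fun y => f y - μ / 2 * ‖y‖ ^ 2) (sub_pos.2 hμL)
    (hc.gradient_lower_bound (hasGradientAt_of_quadratic_bound (hc.abs_le_of_upper (hup x))))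
    (hup y)

end Aux

/-- Interpolation conditions for the class of `μ`-strongly convex and `L`-smooth functions
(Proposition 2.2): a finite data set `{(x_i, f_i, g_i)}` is interpolable by this class if and
only if the quadratic interpolation inequalities hold for all pairs of indices. -/
theorem stmt4 (d : ℕ) (μ L : ℝ) (hμ : 0 ≤ μ) (hμL : μ < L)
    (I : Type*) [Fintype I]
    (x : I → EuclideanSpace ℝ (Fin d)) (fv : I → ℝ) (g : I → EuclideanSpace ℝ (Fin d)) :
    (∃ f : EuclideanSpace ℝ (Fin d) → ℝ,
        ConvexOn ℝ Set.univ (fun y => f y - μ / 2 * ‖y‖ ^ 2) ∧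
        Differentiable ℝ f ∧
        LipschitzWith L.toNNReal (gradient f) ∧
        ∀ i, f (x i) = fv i ∧ gradient f (x i) = g i) ↔
      ∀ i j, fv j ≥ fv i + ⟪g i, x j - x i⟫ +
        L / (2 * (L - μ)) * ((1 / L) * ‖g i - g j‖ ^ 2 + μ * ‖x i - x j‖ ^ 2 -
          (2 * μ / L) * ⟪g i - g j, x i - x j⟫) := by
  constructor
  · rintro ⟨f, hc, hd, hl, hf⟩ i j
    have := interpolation_necessary hμ hμL hc hd hl (x i) (x j)
    simpa only [(hf i).1, (hf i).2, (hf j).1, (hf j).2] using this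
  · intro h
    rcases isEmpty_or_nonempty I with hI | hI
    · -- the simplex over an empty index set is empty, so interpolate a single zero datum instead
      obtain ⟨f, hc, hd, hl, -⟩ := exists_interpolant hμ hμL
        (fun _ : Unit => (0 : EuclideanSpace ℝ (Fin d))) (fun _ => 0) (fun _ => 0) (by simp)
      exact ⟨f, hc, hd, hl, fun i => hI.elim i⟩
    · exact exists_interpolant hμ hμL x g fv h
end

section
/- Let k ∈ ℕ and p ∈ ℕ with p ≥ 1, and let M be an order-p super-symmetric 2^p × 2^p block matrix whose entries are real symmetric k × k matrices. Then there exist 2^p pairwise distinct permutations π of the index set {1, …, 2^p} such that M_{π(i), π(j)} = M_{i,j} for all indices i, j. -/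
/-! Adding a fixed bit-vector `v` (that is, bitwise XOR with `v`) to all indices leaves a
super-symmetric matrix unchanged: flipping the top bit of both indices exchanges the two diagonal
blocks and the two off-diagonal blocks, which agree, and the lower bits are handled inside each
block by induction on `p` (`SuperSymAux.add_left`). The group of bit-vectors acts on itself by
translations, and distinct vectors give distinct translations, so this yields `2 ^ p` distinct
permutations, transported to `Fin (2 ^ p)` along `finFunctionFinEquiv`. -/

/-- Order-`p` super-symmetry of a `2^p × 2^p` matrix, with indices encoded as functions
`Fin p → Fin 2` (the entry at bit-vectors `(i, j)` is the usual entry at the corresponding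
binary indices, the last bit being the most significant one, i.e. selecting the
`2^{p-1} × 2^{p-1}` block). For `p ≥ 1` it unfolds to: the four blocks form an order-1
super-symmetric `2 × 2` block pattern `[[A, B], [B, A]]`, and each block is order-`(p−1)`
super-symmetric. -/
def SuperSymAux {α : Type*} : (p : ℕ) → ((Fin p → Fin 2) → (Fin p → Fin 2) → α) → Prop
  | 0, _ => True
  | p + 1, N =>
      (∀ i j, N (Fin.snoc i 0) (Fin.snoc j 0) = N (Fin.snoc i 1) (Fin.snoc j 1)) ∧
      (∀ i j, N (Fin.snoc i 0) (Fin.snoc j 1) = N (Fin.snoc i 1) (Fin.snoc j 0)) ∧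
      (∀ a b : Fin 2, SuperSymAux p fun i j => N (Fin.snoc i a) (Fin.snoc j b))

/-- A `2^p × 2^p` block matrix `M` (entries in any type) is order-`p` super-symmetric, where
`finFunctionFinEquiv : (Fin p → Fin 2) ≃ Fin (2 ^ p)` identifies bit-vectors with indices. -/
def SuperSym {α : Type*} (p : ℕ) (M : Matrix (Fin (2 ^ p)) (Fin (2 ^ p)) α) : Prop :=
  SuperSymAux p fun i j => M (finFunctionFinEquiv i) (finFunctionFinEquiv j)

theorem snoc_add_snoc {p : ℕ} (v i : Fin p → Fin 2) (a b : Fin 2) :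
    (Fin.snoc v a + Fin.snoc i b : Fin (p + 1) → Fin 2)
      = (Fin.snoc (v + i) (a + b) : Fin (p + 1) → Fin 2) := by
  funext x
  refine Fin.lastCases ?_ (fun x => ?_) x <;> simp

theorem SuperSymAux.add_left {α : Type*} {p : ℕ} {N : (Fin p → Fin 2) → (Fin p → Fin 2) → α}
    (h : SuperSymAux p N) (v i j : Fin p → Fin 2) : N (v + i) (v + j) = N i j := by
  induction p with
  | zero => exact congrArg₂ N (Subsingleton.elim _ _) (Subsingleton.elim _ _)
  | succ p ih =>
    obtain ⟨h₁, h₂, h₃⟩ := h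
    rw [← Fin.snoc_init_self v, ← Fin.snoc_init_self i, ← Fin.snoc_init_self j]
    generalize (Fin.init v : Fin p → Fin 2) = v'
    generalize (Fin.init i : Fin p → Fin 2) = i'
    generalize (Fin.init j : Fin p → Fin 2) = j'
    generalize v (Fin.last p) = c
    generalize i (Fin.last p) = a
    generalize j (Fin.last p) = b
    refine Eq.trans ?_ (ih (h₃ a b) v' i' j')
    rw [snoc_add_snoc, snoc_add_snoc]
    -- Only the top bits still differ, by a common shift `c`.
    generalize v' + i' = x
    generalize v' + j' = y
    fin_cases c <;> fin_cases a <;> fin_cases b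
    · rfl
    · rfl
    · rfl
    · rfl
    · exact (h₁ x y).symm
    · exact (h₂ x y).symm
    · exact h₂ x y
    · exact h₁ x y

/-- An order-`p` super-symmetric `2^p × 2^p` block matrix with real symmetric `k × k` entries
is invariant under `2^p` pairwise distinct simultaneous row-column permutations
(Proposition 3.5, second item). -/
theorem stmt7 (k p : ℕ) (hp : 1 ≤ p)
    (M : Matrix (Fin (2 ^ p)) (Fin (2 ^ p)) (Matrix (Fin k) (Fin k) ℝ))
    (hsymm : ∀ i j, (M i j).IsSymm)
    (hss : SuperSym p M) :
    ∃ S : Finset (Equiv.Perm (Fin (2 ^ p))), S.card = 2 ^ p ∧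
      ∀ π ∈ S, ∀ i j, M (π i) (π j) = M i j := by
  classical
  let e : (Fin p → Fin 2) ≃ Fin (2 ^ p) := finFunctionFinEquiv
  let f : (Fin p → Fin 2) → Equiv.Perm (Fin (2 ^ p)) := fun v => e.permCongr (Equiv.addLeft v)
  have hf : Function.Injective f := fun v w h => by
    have h' : Equiv.addLeft v = Equiv.addLeft w := e.permCongr.injective h
    simpa using DFunLike.congr_fun h' 0
  refine ⟨Finset.univ.image f, ?_, ?_⟩
  · rw [Finset.card_image_of_injective _ hf]
    simp
  · intro π hπ i j
    obtain ⟨v, -, rfl⟩ := Finset.mem_image.mp hπ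
    have h := SuperSymAux.add_left hss v (e.symm i) (e.symm j)
    change M (e (v + e.symm i)) (e (v + e.symm j)) = M (e (e.symm i)) (e (e.symm j)) at h
    rw [e.apply_symm_apply, e.apply_symm_apply] at h
    exact h
end
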